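/- Suppose the formula φ(x̄,ȳ) does not exemplify SOP₁ in T (in particular this holds if T is NSOP₁). Assume M₁ ≺ M₂ ≺ 𝔠, p is a (not necessarily complete) type over M₂ containing the formula φ(x̄, b̄*) for some b̄* ∈ M₂ \ M₁. Then there is a finite q' ⊆ tp(b̄*/M₁) such that at least one of the following holds: (i) for every b̄ ∈ M₁ realizing q'(ȳ), φ(x̄, b̄) ∉ p; or (ii) for every b̄ ∈ M₁ realizing q'(ȳ), the set {φ(x̄, b̄), φ(x̄, b̄*)} is consistent. -/

import Mathlib

open FirstOrder FirstOrder.Language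

namespace SopPaper

variable {L : FirstOrder.Language.{0, 0}}

/-- A first-order formula with parameters from `M`, in free variables indexed by `Fin m`. -/
structure ParamFormula (L : FirstOrder.Language.{0, 0}) (M : Type*) [L.Structure M] (m : ℕ) where
  k : ℕ
  toFormula : L.Formula (Fin m ⊕ Fin k)
  par : Fin k → M

variable {M : Type*} [L.Structure M]

/-- Realization of a formula with parameters at a tuple `e`. -/
def ParamFormula.Realize {m : ℕ} (ψ : ParamFormula L M m) (e : Fin m → M) : Prop :=
  ψ.toFormula.Realize (Sum.elim e ψ.par)

/-- A tuple `e` realizes the partial type `p`. -/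
def Realizes {m : ℕ} (p : Set (ParamFormula L M m)) (e : Fin m → M) : Prop :=
  ∀ ψ ∈ p, ψ.Realize e

/-- A partial type (over the monster model) is consistent iff it is realized. -/
def Consistent {m : ℕ} (p : Set (ParamFormula L M m)) : Prop :=
  ∃ e, Realizes p e

/-- The restriction `ρ ↾ k` of an infinite branch `ρ ∈ 2^ω` to a finite sequence. -/
def restrict (ρ : ℕ → Bool) (k : ℕ) : List Bool :=
  List.ofFn fun i : Fin k => ρ i

/-- `φ(x̄, ȳ)` exemplifies SOP₁ in the structure `M` (thought of as the monster model):
there is a tree of parameters `⟨ā_η : η ∈ 2^{<ω}⟩` such that every branch is consistent,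
and `{φ(x̄, ā_η), φ(x̄, ā_{ν⌢⟨1⟩})}` is inconsistent whenever `ν⌢⟨0⟩ ⊴ η`. -/
def ExemplifiesSOP1 {mx my : ℕ} (φ : L.Formula (Fin mx ⊕ Fin my)) (M : Type*)
    [L.Structure M] : Prop :=
  ∃ a : List Bool → Fin my → M,
    (∀ ρ : ℕ → Bool, ∃ e : Fin mx → M, ∀ k : ℕ,
        φ.Realize (Sum.elim e (a (restrict ρ k)))) ∧
    ∀ ν η : List Bool, (ν ++ [false]) <+: η →
      ¬ ∃ e : Fin mx → M,
          φ.Realize (Sum.elim e (a η)) ∧ φ.Realize (Sum.elim e (a (ν ++ [true])))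

/-- `φ(x̄, ȳ)` exemplifies SOP₁' in the structure `M`:  there is a tree of parameters
`⟨ā_η : η ∈ 2^{<ω}⟩` such that for every branch `ρ ∈ 2^ω` the signed set
`{φ(x̄, ā_{ρ↾n})^{ρ(n)} : n < ω}` is consistent, and `{φ(x̄, ā_η), φ(x̄, ā_ν)}` is
inconsistent whenever `ν⌢⟨0⟩ ⊴ η`. -/
def ExemplifiesSOP1' {mx my : ℕ} (φ : L.Formula (Fin mx ⊕ Fin my)) (M : Type*)
    [L.Structure M] : Prop :=
  ∃ a : List Bool → Fin my → M,
    (∀ ρ : ℕ → Bool, ∃ e : Fin mx → M, ∀ k : ℕ,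
        (φ.Realize (Sum.elim e (a (restrict ρ k))) ↔ ρ k = true)) ∧
    ∀ ν η : List Bool, (ν ++ [false]) <+: η →
      ¬ ∃ e : Fin mx → M,
          φ.Realize (Sum.elim e (a η)) ∧ φ.Realize (Sum.elim e (a ν))

/-- The formula `¬ (∃ x̄)(φ(x̄, ȳ) ∧ φ(x̄, z̄))` in the variables `ȳ ⊕ z̄`. -/
def incompatFormula {mx my : ℕ} (φ : L.Formula (Fin mx ⊕ Fin my)) :
    L.Formula (Fin my ⊕ Fin my) :=
  (((BoundedFormula.relabel
        (Sum.elim (fun i => Sum.inr i) fun j => Sum.inl (Sum.inl j)) φ) ⊓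
      (BoundedFormula.relabel
        (Sum.elim (fun i => Sum.inr i) fun j => Sum.inl (Sum.inr j)) φ)).exs).not

/-- `rk¹_φ(p, q) ≥ n`. -/
def RankGE {mx my : ℕ} (φ : L.Formula (Fin mx ⊕ Fin my)) :
    ℕ → Set (ParamFormula L M mx) → Set (ParamFormula L M my) → Prop
  | 0, p, q => Consistent p ∧ Consistent q
  | n + 1, p, q =>
      ∃ c : Fin my → M, Realizes q c ∧
        RankGE φ n (insert ⟨my, φ, c⟩ p) q ∧
        RankGE φ n p (insert ⟨my, incompatFormula φ, c⟩ q)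

/-- `a` is a `φ`-SOP₁' tree for `p(x̄)` and `q(ȳ)` of depth `n`. -/
def IsSOP1'Tree {mx my : ℕ} (φ : L.Formula (Fin mx ⊕ Fin my))
    (p : Set (ParamFormula L M mx)) (q : Set (ParamFormula L M my))
    (n : ℕ) (a : List Bool → Fin my → M) : Prop :=
  (∀ η : List Bool, η.length = n → ∃ e : Fin mx → M, Realizes p e ∧
      ∀ ℓ : ℕ, ℓ < n →
        (φ.Realize (Sum.elim e (a (η.take ℓ))) ↔ η.getD ℓ false = true)) ∧
  (∀ η : List Bool, η.length ≤ n → Realizes q (a η)) ∧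
  (∀ ν η : List Bool, η.length ≤ n → (ν ++ [false]) <+: η →
      ¬ ∃ e : Fin mx → M,
          φ.Realize (Sum.elim e (a η)) ∧ φ.Realize (Sum.elim e (a ν)))

/-- `φ(x̄, ȳ)` exemplifies SOP₂ in the structure `M`. -/
def ExemplifiesSOP2 {mx my : ℕ} (φ : L.Formula (Fin mx ⊕ Fin my)) (M : Type*)
    [L.Structure M] : Prop :=
  ∃ a : List Bool → Fin my → M,
    (∀ ρ : ℕ → Bool, ∃ e : Fin mx → M, ∀ k : ℕ,
        φ.Realize (Sum.elim e (a (restrict ρ k)))) ∧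
    ∀ η ν : List Bool, ¬ η <+: ν → ¬ ν <+: η →
      ¬ ∃ e : Fin mx → M,
          φ.Realize (Sum.elim e (a η)) ∧ φ.Realize (Sum.elim e (a ν))

/-!
Let `e ⊨ p`. If no finite `q'` works, then every `M₁`-definable set containing `b̄*` contains
a tuple `b̄ ∈ M₁` with `φ(e, b̄)` and a tuple `d̄ ∈ M₁` incompatible with `b̄*`. The rank
`rk¹_φ(p, q) ≥ n` is a definable condition on the parameters of `p` and `q`, so these
approximations of `b̄*` serve as witnesses making the rank infinite. Rank `2n + 1` yields
an SOP₁ tree of height `n`, and an ultraproduct of such trees is a full one.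
-/

universe w

variable {m k mx my : ℕ}

/-- The tuples `b` and `c` are incompatible when `{φ(x̄, b), φ(x̄, c)}` is inconsistent, the
relation that separates siblings in an SOP₁ tree. -/
def Incompatible (φ : L.Formula (Fin mx ⊕ Fin my)) (b c : Fin my → M) : Prop :=
  ¬ ∃ e : Fin mx → M, φ.Realize (Sum.elim e b) ∧ φ.Realize (Sum.elim e c)

theorem Incompatible.symm {φ : L.Formula (Fin mx ⊕ Fin my)} {b c : Fin my → M}
    (h : Incompatible φ b c) : Incompatible φ c b :=
  fun ⟨e, hc, hb⟩ => h ⟨e, hb, hc⟩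

theorem realize_incompatFormula {φ : L.Formula (Fin mx ⊕ Fin my)} {b c : Fin my → M} :
    (incompatFormula φ).Realize (Sum.elim b c) ↔ Incompatible φ b c := by
  have relabel_iff (f : Fin my → Fin my ⊕ Fin my) (xs : Fin mx → M) :
      BoundedFormula.Realize (BoundedFormula.relabel
        (Sum.elim (fun i => Sum.inr i) fun j => Sum.inl (f j)) φ) (Sum.elim b c) xs ↔
      φ.Realize (Sum.elim xs (Sum.elim b c ∘ f)) := by
    rw [BoundedFormula.realize_relabel, Formula.Realize]
    refine iff_of_eq (congrArg₂ _ ?_ (Subsingleton.elim _ _))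
    ext (i | j) <;> rfl
  exact not_congr (BoundedFormula.realize_exs.trans (exists_congr fun xs =>
    BoundedFormula.realize_inf.trans
      (and_congr (relabel_iff Sum.inl xs) (relabel_iff Sum.inr xs))))

theorem realizes_insert {ψ : ParamFormula L M m} {p : Set (ParamFormula L M m)} {e : Fin m → M} :
    Realizes (insert ψ p) e ↔ ψ.Realize e ∧ Realizes p e :=
  Set.forall_mem_insert

theorem Consistent.anti {p p' : Set (ParamFormula L M m)} (h : p' ⊆ p) :
    Consistent p → Consistent p' :=
  fun ⟨e, he⟩ => ⟨e, fun ψ hψ => he ψ (h hψ)⟩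

section Rank

variable {φ : L.Formula (Fin mx ⊕ Fin my)} {n : ℕ}

theorem RankGE.anti {p p' : Set (ParamFormula L M mx)} {q q' : Set (ParamFormula L M my)}
    (hp : p' ⊆ p) (hq : q' ⊆ q) (h : RankGE φ n p q) : RankGE φ n p' q' := by
  induction n generalizing p p' q q' with
  | zero => exact ⟨h.1.anti hp, h.2.anti hq⟩
  | succ n ih =>
    obtain ⟨c, hc, h₁, h₀⟩ := h
    exact ⟨c, fun ψ hψ => hc ψ (hq hψ), ih (Set.insert_subset_insert hp) hq h₁,
      ih hp (Set.insert_subset_insert hq) h₀⟩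

theorem RankGE.of_succ {p : Set (ParamFormula L M mx)} {q : Set (ParamFormula L M my)}
    (h : RankGE φ (n + 1) p q) : RankGE φ n p q :=
  let ⟨_, _, _, h₀⟩ := h
  h₀.anti subset_rfl (Set.subset_insert _ _)

end Rank

section Tree

/-- The tree with root `b` and immediate subtrees `a false` and `a true`. -/
def joinTrees {X : Type*} (b : X) (a : Bool → List Bool → X) : List Bool → X
  | [] => b
  | i :: η => a i η

theorem restrict_succ (ρ : ℕ → Bool) (k : ℕ) :
    restrict ρ (k + 1) = ρ 0 :: restrict (fun i => ρ (i + 1)) k :=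
  List.ofFn_succ

/-- A tree of height `n` of realizations of `q` as in the definition of SOP₁, all of whose branches
are consistent with `p`. Values of `a` above height `n` only have to realize `q`. -/
structure IsSOP1Tree (φ : L.Formula (Fin mx ⊕ Fin my)) (p : Set (ParamFormula L M mx))
    (q : Set (ParamFormula L M my)) (n : ℕ) (a : List Bool → Fin my → M) : Prop where
  branch : ∀ ρ : ℕ → Bool, ∃ e : Fin mx → M, Realizes p e ∧
    ∀ k ≤ n, φ.Realize (Sum.elim e (a (restrict ρ k)))
  realizes : ∀ η, Realizes q (a η)
  incompatible : ∀ ν η : List Bool, η.length ≤ n → (ν ++ [false]) <+: η →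
    Incompatible φ (a η) (a (ν ++ [true]))

variable {φ : L.Formula (Fin mx ⊕ Fin my)} {p : Set (ParamFormula L M mx)}
  {q : Set (ParamFormula L M my)} {n : ℕ} {b : Fin my → M}

theorem isSOP1Tree_zero (hp : Consistent (insert ⟨my, φ, b⟩ p)) (hb : Realizes q b) :
    IsSOP1Tree φ p q 0 fun _ => b where
  branch _ :=
    let ⟨e, he⟩ := hp
    ⟨e, (realizes_insert.1 he).2, fun _ _ => (realizes_insert.1 he).1⟩
  realizes _ := hb
  incompatible ν η hη h := by simpa using h.length_le.trans hη

theorem IsSOP1Tree.join {a : Bool → List Bool → Fin my → M} (hb : Realizes q b)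
    (h₁ : IsSOP1Tree φ (insert ⟨my, φ, b⟩ p) q n (a true))
    (h₀ : IsSOP1Tree φ (insert ⟨my, φ, b⟩ p) (insert ⟨my, incompatFormula φ, a true []⟩ q) n
      (a false)) :
    IsSOP1Tree φ p q (n + 1) (joinTrees b a) where
  branch ρ := by
    obtain ⟨e, he, hbranch⟩ : ∃ e, Realizes (insert ⟨my, φ, b⟩ p) e ∧ ∀ k ≤ n,
        φ.Realize (Sum.elim e (a (ρ 0) (restrict (fun i => ρ (i + 1)) k))) := by
      cases ρ 0 with
      | false => exact h₀.branch _
      | true => exact h₁.branch _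
    obtain ⟨hφ, hp⟩ := realizes_insert.1 he
    refine ⟨e, hp, fun k hk => ?_⟩
    cases k with
    | zero => exact hφ
    | succ k => simpa only [restrict_succ, joinTrees] using hbranch k (Nat.le_of_succ_le_succ hk)
  realizes
    | [] => hb
    | true :: η => h₁.realizes η
    | false :: η => (realizes_insert.1 (h₀.realizes η)).2
  incompatible
    | _, [], _, h => by simp at h
    | [], i :: η, _, h => by
      obtain rfl : i = false := by simpa using h
      exact realize_incompatFormula.1 (realizes_insert.1 (h₀.realizes η)).1
    | j :: ν, i :: η, hη, h => by
      obtain ⟨rfl, hνη⟩ : j = i ∧ (ν ++ [false]) <+: η := by simpa using h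
      cases j with
      | false => exact h₀.incompatible ν η (Nat.le_of_succ_le_succ hη) hνη
      | true => exact h₁.incompatible ν η (Nat.le_of_succ_le_succ hη) hνη

theorem RankGE.exists_isSOP1Tree (h : RankGE φ (2 * n) (insert ⟨my, φ, b⟩ p) q)
    (hb : Realizes q b) : ∃ a, a [] = b ∧ IsSOP1Tree φ p q n a := by
  induction n generalizing p q b with
  | zero => exact ⟨fun _ => b, rfl, isSOP1Tree_zero h.1 hb⟩
  | succ n ih =>
    -- Each level costs two ranks: the child `b₁` on the right, and then a left child `b₀` whose
    -- subtree is kept incompatible with `b₁`.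
    obtain ⟨b₁, hb₁, h₁, b₀, hb₀, h₀, -⟩ : RankGE φ (2 * n + 1 + 1) (insert ⟨my, φ, b⟩ p) q := h
    obtain ⟨a₁, rfl, ha₁⟩ := ih h₁.of_succ hb₁
    obtain ⟨a₀, -, ha₀⟩ := ih h₀ hb₀
    exact ⟨joinTrees b fun i => if i then a₁ else a₀, rfl, .join hb ha₁ ha₀⟩

end Tree

section Ultraproduct

theorem realize_ultraproduct_sumElim {ι : Type*} {U : Ultrafilter ι} {N : ι → Type*}
    [∀ i, L.Structure (N i)] [∀ i, Nonempty (N i)] {α β : Type*} (φ : L.Formula (α ⊕ β))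
    (x : α → ∀ i, N i) (y : β → ∀ i, N i) :
    φ.Realize (Sum.elim (fun j => (x j : (U : Filter ι).Product N))
      fun j => (y j : (U : Filter ι).Product N)) ↔
      ∀ᶠ i in (U : Filter ι), φ.Realize (Sum.elim (fun j => x j i) fun j => y j i) := by
  convert Ultraproduct.realize_formula_cast (u := U) φ (Sum.elim x y) using 2
  · ext (j | j) <;> rfl
  · ext i
    exact iff_of_eq (congrArg φ.Realize (funext fun j => by cases j <;> rfl))

theorem exists_exemplifiesSOP1_of_isSOP1Tree {M : Type w} [L.Structure M] [Nonempty M]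
    {φ : L.Formula (Fin mx ⊕ Fin my)}
    (h : ∀ n, ∃ a : List Bool → Fin my → M, IsSOP1Tree φ ∅ ∅ n a) :
    ∃ N : Theory.ModelType.{0, 0, w} (L.completeTheory M), ExemplifiesSOP1 φ N := by
  choose a ha using h
  choose e _ he using fun n => (ha n).branch
  let U : Ultrafilter ℕ := Filter.hyperfilter ℕ
  have eventually_ge (k : ℕ) : ∀ᶠ n in (U : Filter ℕ), k ≤ n :=
    Nat.hyperfilter_le_atTop (Filter.eventually_ge_atTop k)
  let N := (U : Filter ℕ).Product fun _ => M
  have : N ⊨ L.completeTheory M := ⟨fun ψ hψ =>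
    (Ultraproduct.sentence_realize ψ).2 (Filter.Eventually.of_forall fun _ => hψ)⟩
  refine ⟨.of _ N, fun η i => ((fun n => a n η i : ℕ → M) : N), fun ρ =>
    ⟨fun i => ((fun n => e n ρ i : ℕ → M) : N), fun k => ?_⟩, ?_⟩
  · exact (realize_ultraproduct_sumElim φ _ _).2
      ((eventually_ge k).mono fun n hn => he n ρ k hn)
  · rintro ν η hνη ⟨x, hη, hν⟩
    obtain ⟨x, rfl⟩ : ∃ x' : Fin mx → ℕ → M, (fun i => (x' i : N)) = x :=
      ⟨fun i => Quotient.out (s := (U : Filter ℕ).productSetoid fun _ => M) (x i),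
        funext fun i => Quotient.out_eq _⟩
    have hη' := (realize_ultraproduct_sumElim φ _ _).1 hη
    have hν' := (realize_ultraproduct_sumElim φ _ _).1 hν
    obtain ⟨n, ⟨hnη, hnν⟩, hn⟩ := ((hη'.and hν').and (eventually_ge η.length)).exists
    exact (ha n).incompatible ν η hn hνη ⟨_, hnη, hnν⟩

theorem exists_exemplifiesSOP1_of_rankGE {M : Type w} [L.Structure M] [Nonempty M]
    {φ : L.Formula (Fin mx ⊕ Fin my)} (h : ∀ n, RankGE (M := M) φ n ∅ ∅) :
    ∃ N : Theory.ModelType.{0, 0, w} (L.completeTheory M), ExemplifiesSOP1 φ N :=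
  exists_exemplifiesSOP1_of_isSOP1Tree fun n =>
    let ⟨_, hb, hrank, _⟩ := h (2 * n + 1)
    let ⟨a, _, ha⟩ := hrank.exists_isSOP1Tree hb
    ⟨a, ha⟩

end Ultraproduct

section Definability

variable {A : Set M} {α β : Type*}

theorem definable_setOf_realize (A : Set M) (φ : L.Formula α) :
    A.Definable L {v : α → M | φ.Realize v} :=
  (Set.empty_definable_iff.2 ⟨φ, rfl⟩).mono (Set.empty_subset A)

theorem definable_realizes_insert {p : Set (ParamFormula L M m)}
    (hp : A.Definable L {x | Realizes p x}) (ψ : L.Formula (Fin m ⊕ Fin k)) {c : Fin k → M}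
    (hc : ∀ j, c j ∈ A) : A.Definable L {x | Realizes (insert ⟨k, ψ, c⟩ p) x} := by
  have hmap : A.DefinableMap L fun x : Fin m → M => Sum.elim x c := by
    rintro (i | j)
    · exact .proj L
    · exact L.definableFun_const _ (hc j)
  simp only [realizes_insert]
  exact ((definable_setOf_realize A ψ).preimage_map hmap).inter hp

/-- A family of partial types, indexed by tuples `v`, is definable over `A` when
`x̄` realizing `p v` is an `A`-definable relation between `v` and `x̄`. -/
def DefinableTypes (A : Set M) (p : (α → M) → Set (ParamFormula L M m)) : Prop :=
  A.Definable L {w : α ⊕ Fin m → M | Realizes (p (w ∘ Sum.inl)) (w ∘ Sum.inr)}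

theorem definableTypes_const {p : Set (ParamFormula L M m)}
    (hp : A.Definable L {x | Realizes p x}) : DefinableTypes A fun _ : α → M => p :=
  hp.preimage_comp Sum.inr

namespace DefinableTypes

variable {p : (α → M) → Set (ParamFormula L M m)}

protected theorem comp (hp : DefinableTypes A p) (f : α → β) :
    DefinableTypes A fun v : β → M => p (v ∘ f) :=
  Set.Definable.preimage_comp (Sum.map f id) hp

protected theorem insert (hp : DefinableTypes A p) (ψ : L.Formula (Fin m ⊕ Fin k))
    (c : Fin k → α) :
    DefinableTypes A fun v => insert ⟨k, ψ, v ∘ c⟩ (p v) := by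
  have hψ : A.Definable L {w : α ⊕ Fin m → M | ψ.Realize (Sum.elim (w ∘ Sum.inr)
      ((w ∘ Sum.inl) ∘ c))} := by
    convert (definable_setOf_realize A ψ).preimage_comp (Sum.elim Sum.inr (Sum.inl ∘ c)) using 1
    ext w
    simp [Sum.comp_elim, Function.comp_assoc]
  simp only [DefinableTypes, realizes_insert]
  exact hψ.inter hp

theorem definable_realizes (hp : DefinableTypes A p) (c : Fin m → α) :
    A.Definable L {v | Realizes (p v) (v ∘ c)} :=
  Set.Definable.preimage_comp (Sum.elim id c) hp

theorem definable_consistent (hp : DefinableTypes A p) : A.Definable L {v | Consistent (p v)} :=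
  Set.Definable.exists_of_finite hp

theorem definable_rankGE {p : (α → M) → Set (ParamFormula L M mx)}
    {q : (α → M) → Set (ParamFormula L M my)} (hp : DefinableTypes A p) (hq : DefinableTypes A q)
    (φ : L.Formula (Fin mx ⊕ Fin my)) (n : ℕ) : A.Definable L {v | RankGE φ n (p v) (q v)} := by
  induction n generalizing α with
  | zero => exact hp.definable_consistent.inter hq.definable_consistent
  | succ n ih =>
    have hp' := hp.comp (Sum.inl : α → α ⊕ Fin my)
    have hq' := hq.comp (Sum.inl : α → α ⊕ Fin my)
    exact ((hq'.definable_realizes Sum.inr).inter ((ih (hp'.insert φ Sum.inr) hq').inter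
      (ih hp' (hq'.insert (incompatFormula φ) Sum.inr)))).exists_of_finite

end DefinableTypes

theorem exists_paramFormula_of_definable {S : Set (Fin m → M)} (hS : A.Definable L S) :
    ∃ ψ : ParamFormula L M m, (∀ j, ψ.par j ∈ A) ∧ ∀ b, ψ.Realize b ↔ b ∈ S := by
  classical
  obtain ⟨θ, rfl⟩ := Set.definable_iff_exists_formula_sum.1 hS
  let params : Finset A := (BoundedFormula.freeVarFinset θ).toLeft
  let toVar : BoundedFormula.freeVarFinset θ → Fin m ⊕ Fin params.card
    | ⟨.inl a, ha⟩ => .inr (params.equivFin ⟨a, Finset.mem_toLeft.2 ha⟩)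
    | ⟨.inr i, _⟩ => .inl i
  refine ⟨⟨params.card, BoundedFormula.restrictFreeVar θ toVar, fun j =>
    (params.equivFin.symm j).1⟩, fun j => Subtype.coe_prop _, fun b =>
    BoundedFormula.realize_restrictFreeVar _ ?_⟩
  rintro ⟨a | i, h⟩ <;> simp [toVar]

end Definability

/-- The witness at each step is a tuple of `A` satisfying `φ(e, ȳ)` and approximating `r`.
Approximations of `r` that are incompatible with `r` show that `r` itself satisfies the definable
condition imposed on this witness. -/
theorem rankGE_of_approximations {φ : L.Formula (Fin mx ⊕ Fin my)} {A : Set M} {e : Fin mx → M}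
    {r : Fin my → M}
    (hpos : ∀ S, A.Definable L S → r ∈ S →
      ∃ b ∈ S, (∀ j, b j ∈ A) ∧ φ.Realize (Sum.elim e b))
    (hneg : ∀ S, A.Definable L S → r ∈ S → ∃ b ∈ S, (∀ j, b j ∈ A) ∧ Incompatible φ r b)
    {p : Set (ParamFormula L M mx)} {q : Set (ParamFormula L M my)}
    (hp : A.Definable L {x | Realizes p x}) (hq : A.Definable L {y | Realizes q y})
    (he : Realizes p e) (hr : Realizes q r) (n : ℕ) : RankGE φ n p q := by
  induction n generalizing p q with
  | zero => exact ⟨⟨e, he⟩, ⟨r, hr⟩⟩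
  | succ n ih =>
    let S : Set (Fin my → M) := {b | RankGE φ n p (insert ⟨my, incompatFormula φ, b⟩ q)}
    have hS : A.Definable L S := (definableTypes_const hp).definable_rankGE
      ((definableTypes_const hq).insert (incompatFormula φ) id) φ n
    have hrS : r ∈ S := by
      by_contra hrS
      obtain ⟨d, hdS, hdA, hd⟩ := hneg Sᶜ hS.compl hrS
      exact hdS (ih hp (definable_realizes_insert hq _ hdA) he
        (realizes_insert.2 ⟨realize_incompatFormula.2 hd, hr⟩))
    obtain ⟨b, ⟨hbq, hbS⟩, hbA, hb⟩ := hpos _ (hq.inter hS) ⟨hr, hrS⟩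
    exact ⟨b, hbq, ih (definable_realizes_insert hp φ hbA) hq (realizes_insert.2 ⟨hb, he⟩) hr, hbS⟩

theorem finite_subtype_of_NSOP1_general {M : Type w} [L.Structure M] [Nonempty M]
    (φ : L.Formula (Fin mx ⊕ Fin my))
    (hφ : ¬ ∃ N : Theory.ModelType.{0, 0, w} (L.completeTheory M), ExemplifiesSOP1 φ N)
    (A : Set M) (p : Set (ParamFormula L M mx)) (hp : Consistent p) (r : Fin my → M) :
    ∃ q' : Set (ParamFormula L M my), q'.Finite ∧
      (∀ ψ ∈ q', (∀ j, ψ.par j ∈ A) ∧ ψ.Realize r) ∧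
      ((∀ b : Fin my → M, (∀ j, b j ∈ A) → Realizes q' b →
          (⟨my, φ, b⟩ : ParamFormula L M mx) ∉ p) ∨
        (∀ b : Fin my → M, (∀ j, b j ∈ A) → Realizes q' b →
          ∃ e : Fin mx → M, φ.Realize (Sum.elim e b) ∧ φ.Realize (Sum.elim e r))) := by
  by_contra hcon
  obtain ⟨e, he⟩ := hp
  have approx (S : Set (Fin my → M)) (hS : A.Definable L S) (hr : r ∈ S) :
      (∃ b ∈ S, (∀ j, b j ∈ A) ∧ φ.Realize (Sum.elim e b)) ∧
        ∃ d ∈ S, (∀ j, d j ∈ A) ∧ Incompatible φ r d := by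
    obtain ⟨ψ, hψA, hψ⟩ := exists_paramFormula_of_definable hS
    obtain ⟨hpos, hneg⟩ := not_or.1 fun h => hcon
      ⟨{ψ}, Set.finite_singleton ψ, by rintro _ rfl; exact ⟨hψA, (hψ r).2 hr⟩, h⟩
    push Not at hpos
    simp only [not_forall] at hneg
    obtain ⟨b, hbA, hbψ, hbp⟩ := hpos
    obtain ⟨d, hdA, hdψ, hd⟩ := hneg
    exact ⟨⟨b, (hψ b).1 (hbψ ψ rfl), hbA, he _ hbp⟩,
      ⟨d, (hψ d).1 (hdψ ψ rfl), hdA, Incompatible.symm hd⟩⟩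
  have definable_realizes_empty {m : ℕ} :
      A.Definable L {x | Realizes (∅ : Set (ParamFormula L M m)) x} := by simp [Realizes]
  exact hφ (exists_exemplifiesSOP1_of_rankGE fun n => rankGE_of_approximations
    (fun S hS hr => (approx S hS hr).1) (fun S hS hr => (approx S hS hr).2)
    definable_realizes_empty definable_realizes_empty (by simp [Realizes]) (by simp [Realizes]) n)

/-- Suppose the formula `φ(x̄,ȳ)` does not exemplify SOP₁ in `T` (the
complete theory of the monster model `𝔠`); this holds in particular if `T` is NSOP₁.
Assume `M₁ ≺ M₂ ≺ 𝔠`, `p` is a (not necessarily complete) type over `M₂` containing the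
formula `φ(x̄, b̄*)` for some `b̄* ∈ M₂ \ M₁`.  Then there is a finite `q' ⊆ tp(b̄*/M₁)` such
that at least one of the following holds:
(i) for every `b̄ ∈ M₁` realizing `q'(ȳ)`, `φ(x̄, b̄) ∉ p`; or
(ii) for every `b̄ ∈ M₁` realizing `q'(ȳ)`, the set `{φ(x̄, b̄), φ(x̄, b̄*)}` is consistent. -/
theorem finite_subtype_of_NSOP1 (𝔠 : Type) [L.Structure 𝔠] [Nonempty 𝔠]
    {mx my : ℕ} (φ : L.Formula (Fin mx ⊕ Fin my))
    (hNSOP : ¬ ∃ N : Theory.ModelType.{0, 0, 0} (L.completeTheory 𝔠), ExemplifiesSOP1 φ N)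
    (M₁ M₂ : L.ElementarySubstructure 𝔠) (h12 : (M₁ : Set 𝔠) ⊆ (M₂ : Set 𝔠))
    (p : Set (ParamFormula L 𝔠 mx))
    (hpar : ∀ ψ ∈ p, ∀ j, ψ.par j ∈ M₂) (hpcon : Consistent p)
    (bs : Fin my → 𝔠) (hbs₂ : ∀ j, bs j ∈ M₂) (hbs₁ : ¬ ∀ j, bs j ∈ M₁)
    (hφp : (⟨my, φ, bs⟩ : ParamFormula L 𝔠 mx) ∈ p) :
    ∃ q' : Set (ParamFormula L 𝔠 my), q'.Finite ∧
      (∀ ψ ∈ q', (∀ j, ψ.par j ∈ M₁) ∧ ψ.Realize bs) ∧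
      ((∀ b : Fin my → 𝔠, (∀ j, b j ∈ M₁) → Realizes q' b →
          (⟨my, φ, b⟩ : ParamFormula L 𝔠 mx) ∉ p) ∨
        (∀ b : Fin my → 𝔠, (∀ j, b j ∈ M₁) → Realizes q' b →
          ∃ e : Fin mx → 𝔠, φ.Realize (Sum.elim e b) ∧ φ.Realize (Sum.elim e bs))) :=
  finite_subtype_of_NSOP1_general φ hNSOP M₁ p hpcon bs

end SopPaper
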